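/- Let k be a field and P a prime ideal in k[x_1,...,x_n]. Define I_P to be the collection of subsets S of the variable set E = {x_1,...,x_n} such that P ∩ k[S] = ⟨0⟩. Then (E, I_P) is a matroid; that is, I_P contains the empty set, is downward closed, and satisfies the augmentation axiom. -/

import Mathlib

open MvPolynomial

/-- `S` is independent modulo `P`, i.e. `P ∩ k[S] = ⟨0⟩`. -/
def IndepModP {k : Type*} [Field k] {n : ℕ} (P : Ideal (MvPolynomial (Fin n) k))
    (S : Set (Fin n)) : Prop :=
  ∀ f ∈ P, f ∈ MvPolynomial.supported k S → f = 0

theorem indepModP_iff {k : Type*} [Field k] {n : ℕ} (P : Ideal (MvPolynomial (Fin n) k))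
    (S : Set (Fin n)) :
    IndepModP P S ↔ AlgebraicIndependent k
      (fun i : S => (Ideal.Quotient.mkₐ k P) (X (i : Fin n))) := by
  have key : ∀ p : MvPolynomial S k,
      aeval (fun i : S => (Ideal.Quotient.mkₐ k P) (X (i : Fin n))) p =
        Ideal.Quotient.mkₐ k P (rename (Subtype.val) p) := by
    intro p
    have : aeval (fun i : S => (Ideal.Quotient.mkₐ k P) (X (i : Fin n))) =
        (Ideal.Quotient.mkₐ k P).comp (rename (R := k) (Subtype.val : S → Fin n)) := by
      ext i
      simp
    rw [this]; rfl
  rw [algebraicIndependent_iff]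
  constructor
  · intro h p hp
    rw [key, Ideal.Quotient.mkₐ_eq_mk, Ideal.Quotient.eq_zero_iff_mem] at hp
    have := h _ hp (by rw [supported_eq_range_rename]; exact ⟨p, rfl⟩)
    exact rename_injective _ Subtype.val_injective (by rw [this, map_zero])
  · intro h f hf hs
    rw [supported_eq_range_rename] at hs
    obtain ⟨p, rfl⟩ := hs
    have := h p (by
      rw [key, Ideal.Quotient.mkₐ_eq_mk, Ideal.Quotient.eq_zero_iff_mem]; exact hf)
    rw [this]; exact map_zero _

theorem indepModP_iff_comap {k : Type*} [Field k] {n : ℕ} (P : Ideal (MvPolynomial (Fin n) k))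
    [P.IsPrime] (S : Set (Fin n)) :
    IndepModP P S ↔ ((AlgebraicIndependent.matroid k (MvPolynomial (Fin n) k ⧸ P)).comap
      (fun i => Ideal.Quotient.mkₐ k P (X i))).Indep S := by
  rw [indepModP_iff, Matroid.comap_indep_iff, AlgebraicIndependent.matroid_indep_iff]
  constructor
  · intro h
    refine ⟨?_, Set.injOn_iff_injective.2 h.injective⟩
    exact AlgebraicIndependent.image (f := fun i => Ideal.Quotient.mkₐ k P (X i)) h
  · rintro ⟨h, hi⟩
    exact AlgebraicIndependent.comp h
      (fun i : S => ⟨_, Set.mem_image_of_mem _ i.2⟩)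
      (fun a b hab => Set.injOn_iff_injective.1 hi (congrArg Subtype.val hab))

/-- For a prime ideal `P ⊆ k[x_1,…,x_n]`, the collection
`I_P = {S : P ∩ k[S] = ⟨0⟩}` satisfies the independence axioms of a matroid on the
set of variables: it contains the empty set, is downward closed, and satisfies
augmentation. -/
theorem coordinate_matroid_axioms {k : Type*} [Field k] {n : ℕ}
    (P : Ideal (MvPolynomial (Fin n) k)) (hP : P.IsPrime) :
    IndepModP P (∅ : Set (Fin n)) ∧
    (∀ I₁ I₂ : Set (Fin n), I₂ ⊆ I₁ → IndepModP P I₁ → IndepModP P I₂) ∧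
    (∀ I₁ I₂ : Set (Fin n), IndepModP P I₁ → IndepModP P I₂ → I₁.ncard < I₂.ncard →
      ∃ x ∈ I₂ \ I₁, IndepModP P (insert x I₁)) := by
  have := hP
  simp only [indepModP_iff_comap]
  refine ⟨Matroid.empty_indep _, fun I₁ I₂ h h1 => h1.subset h, fun I₁ I₂ h1 h2 hlt => ?_⟩
  refine (h1.augment h2 ?_)
  rw [← (Set.toFinite I₁).cast_ncard_eq, ← (Set.toFinite I₂).cast_ncard_eq]
  exact_mod_cast hlt
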